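/- Two-point minimax lower bound (core of Theorem 3): Let P₁ and P₂ be probability measures on a measurable space Ω with klDiv(P₁ ‖ P₂) ≤ 1/n for some integer n ≥ 1, and let v₁, v₂ ∈ ℝ. Then for every measurable estimator v̂ : Ωⁿ → ℝ computed from n i.i.d. samples, max(∫ (v̂ − v₁)² dP₁^{⊗n}, ∫ (v̂ − v₂)² dP₂^{⊗n}) ≥ (v₁ − v₂)² / (16e). -/

import Mathlib

/-!
The Hellinger affinity `A = ∫ √(dμ dν)` measures how well `μ` and `ν` can be told apart.
Integrating the triangle inequality `d(v₁, v₂) ≤ d(f x, v₁) + d(f x, v₂)` against `√(dμ dν)` and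
applying Cauchy–Schwarz to each term gives `d(v₁, v₂) A ≤ √R₁ + √R₂`, where `R₁`, `R₂` are the
squared-error risks of `f` under `μ` and `ν`; hence `d(v₁, v₂)² A² / 4 ≤ max R₁ R₂`. Jensen's
inequality applied to `A = ∫ exp (-log (dμ/dν) / 2) dμ` gives `A² ≥ exp (-KL(μ ‖ ν))`, and the
divergence of a product is the sum of the divergences, so that it is at most `1` for `n` samples
with divergence at most `1 / n` each. This yields the constant `4e` in place of `16e`.
-/

open MeasureTheory
open scoped ENNReal

open Classical in
/-- The Kullback–Leibler divergence `∫ log(dP/dQ) dP`, taken to be `+∞` when `P` is not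
absolutely continuous with respect to `Q` (or the log-likelihood ratio is not
`P`-integrable). -/
noncomputable def klDiv {Ω : Type*} [MeasurableSpace Ω] (P Q : Measure Ω) : EReal :=
  if P ≪ Q ∧ Integrable (llr P Q) P then ((∫ ω, llr P Q ω ∂P : ℝ) : EReal) else ⊤

theorem ofReal_sub_sq_eq_edist_sq (a b : ℝ) : ENNReal.ofReal ((a - b) ^ 2) = edist a b ^ 2 := by
  rw [edist_dist, Real.dist_eq, ← ENNReal.ofReal_pow (abs_nonneg _), sq_abs]

theorem indicator_univ_pi_prod {ι M : Type*} [Fintype ι] [CommMonoidWithZero M] {Ω : ι → Type*}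
    (s : ∀ i, Set (Ω i)) (g : ∀ i, Ω i → M) (x : ∀ i, Ω i) :
    (Set.univ.pi s).indicator (fun x ↦ ∏ i, g i (x i)) x = ∏ i, (s i).indicator (g i) (x i) := by
  classical
  simp only [Set.indicator_apply, Set.mem_univ_pi, Finset.prod_ite_zero, Finset.mem_univ,
    true_imp_iff]

theorem rpow_half_sq (a : ℝ≥0∞) : (a ^ (1 / 2 : ℝ)) ^ 2 = a := by
  rw [← ENNReal.rpow_two, ← ENNReal.rpow_mul]; norm_num

section Integrals

variable {α : Type*} [MeasurableSpace α] {μ : Measure α}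

theorem sq_lintegral_mul_le {f g : α → ℝ≥0∞} (hf : AEMeasurable f μ) (hg : AEMeasurable g μ) :
    (∫⁻ x, f x * g x ∂μ) ^ 2 ≤ (∫⁻ x, f x ^ 2 ∂μ) * ∫⁻ x, g x ^ 2 ∂μ := by
  have cauchy_schwarz := ENNReal.lintegral_mul_le_Lp_mul_Lq μ Real.HolderConjugate.two_two hf hg
  simp only [ENNReal.rpow_ofNat, Pi.mul_apply] at cauchy_schwarz
  simpa only [mul_pow, rpow_half_sq] using pow_le_pow_left' cauchy_schwarz 2

theorem ofReal_exp_integral_le_lintegral_ofReal_exp [IsProbabilityMeasure μ] {f : α → ℝ}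
    (hf : Integrable f μ) :
    ENNReal.ofReal (Real.exp (∫ x, f x ∂μ)) ≤ ∫⁻ x, ENNReal.ofReal (Real.exp (f x)) ∂μ := by
  by_cases h_int : Integrable (fun x ↦ Real.exp (f x)) μ
  · rw [← ofReal_integral_eq_lintegral_ofReal h_int (.of_forall fun x ↦ (Real.exp_pos _).le)]
    exact ENNReal.ofReal_le_ofReal <| convexOn_exp.map_integral_le
      Real.continuous_exp.continuousOn isClosed_univ (.of_forall fun _ ↦ Set.mem_univ _) hf h_int
  · have h_top : ∫⁻ x, ENNReal.ofReal (Real.exp (f x)) ∂μ = ∞ := by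
      by_contra h_ne_top
      exact h_int <| (lintegral_ofReal_ne_top_iff_integrable
        (Real.continuous_exp.comp_aestronglyMeasurable hf.1)
        (.of_forall fun x ↦ (Real.exp_pos _).le)).mp h_ne_top
    exact h_top ▸ le_top

end Integrals

section HellingerAffinity

variable {α : Type*} [MeasurableSpace α]

/-- The Hellinger affinity (Bhattacharyya coefficient) `∫ √(dμ dν)` of two measures, expressed
through the density of `μ` with respect to `ν`: the part of `μ` singular to `ν` does not
contribute. -/
noncomputable def hellingerAffinity (μ ν : Measure α) : ℝ≥0∞ :=
  ∫⁻ x, μ.rnDeriv ν x ^ (1 / 2 : ℝ) ∂ν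

variable {μ ν : Measure α}

theorem lintegral_exp_neg_half_llr [SigmaFinite μ] [SigmaFinite ν] (hμν : μ ≪ ν) :
    ∫⁻ x, ENNReal.ofReal (Real.exp (-llr μ ν x / 2)) ∂μ = hellingerAffinity μ ν := by
  have h_meas : Measurable fun x ↦ ENNReal.ofReal (Real.exp (-llr μ ν x / 2)) := by fun_prop
  rw [hellingerAffinity, ← lintegral_rnDeriv_mul hμν h_meas.aemeasurable]
  refine lintegral_congr_ae ?_
  filter_upwards [μ.rnDeriv_lt_top ν] with x h_lt_top
  rcases eq_or_ne (μ.rnDeriv ν x) 0 with h_zero | h_ne_zero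
  · simp [h_zero]
  have h_pos : 0 < (μ.rnDeriv ν x).toReal := ENNReal.toReal_pos h_ne_zero h_lt_top.ne
  simp only [llr_def]
  set r := (μ.rnDeriv ν x).toReal
  rw [← ENNReal.ofReal_toReal h_lt_top.ne, ENNReal.ofReal_rpow_of_pos h_pos,
    ← ENNReal.ofReal_mul h_pos.le]
  congr 1
  calc r * Real.exp (-Real.log r / 2)
      = Real.exp (Real.log r) * Real.exp (-Real.log r / 2) := by rw [Real.exp_log h_pos]
    _ = Real.exp (Real.log r * (1 / 2)) := by rw [← Real.exp_add]; ring_nf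
    _ = r ^ (1 / 2 : ℝ) := (Real.rpow_def_of_pos h_pos _).symm

theorem sq_lintegral_mul_rnDeriv_rpow_half_le_left [SigmaFinite μ] [IsProbabilityMeasure ν]
    (hμν : μ ≪ ν) {f : α → ℝ≥0∞} (hf : AEMeasurable f ν) :
    (∫⁻ x, f x * μ.rnDeriv ν x ^ (1 / 2 : ℝ) ∂ν) ^ 2 ≤ ∫⁻ x, f x ^ 2 ∂μ := by
  have h := sq_lintegral_mul_le (μ := ν) (g := fun _ ↦ 1)
    (hf.mul ((μ.measurable_rnDeriv ν).pow_const (1 / 2 : ℝ)).aemeasurable) aemeasurable_const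
  simpa only [Pi.mul_apply, mul_one, one_pow, lintegral_const, measure_univ, mul_pow,
    rpow_half_sq, mul_comm _ (μ.rnDeriv ν _),
    lintegral_rnDeriv_mul hμν (hf.pow_const 2)] using h

theorem sq_lintegral_mul_rnDeriv_rpow_half_le_right [IsProbabilityMeasure μ]
    {f : α → ℝ≥0∞} (hf : AEMeasurable f ν) :
    (∫⁻ x, f x * μ.rnDeriv ν x ^ (1 / 2 : ℝ) ∂ν) ^ 2 ≤ ∫⁻ x, f x ^ 2 ∂ν := by
  calc (∫⁻ x, f x * μ.rnDeriv ν x ^ (1 / 2 : ℝ) ∂ν) ^ 2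
      ≤ (∫⁻ x, f x ^ 2 ∂ν) * ∫⁻ x, μ.rnDeriv ν x ∂ν := by
        simpa only [rpow_half_sq] using sq_lintegral_mul_le hf
          ((μ.measurable_rnDeriv ν).pow_const (1 / 2 : ℝ)).aemeasurable
    _ ≤ (∫⁻ x, f x ^ 2 ∂ν) * 1 := by
        gcongr
        exact Measure.lintegral_rnDeriv_le.trans prob_le_one
    _ = ∫⁻ x, f x ^ 2 ∂ν := mul_one _

theorem edist_mul_hellingerAffinity_sq_le_four_mul_max [IsProbabilityMeasure μ]
    [IsProbabilityMeasure ν] (hμν : μ ≪ ν) {E : Type*} [PseudoEMetricSpace E] [MeasurableSpace E]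
    [OpensMeasurableSpace E] {f : α → E} (hf : AEMeasurable f ν) (v₁ v₂ : E) :
    (edist v₁ v₂ * hellingerAffinity μ ν) ^ 2
      ≤ 4 * max (∫⁻ x, edist (f x) v₁ ^ 2 ∂μ) (∫⁻ x, edist (f x) v₂ ^ 2 ∂ν) := by
  let s : α → ℝ≥0∞ := fun x ↦ μ.rnDeriv ν x ^ (1 / 2 : ℝ)
  have h_edist (v : E) : AEMeasurable (fun x ↦ edist (f x) v) ν :=
    measurable_edist_left.comp_aemeasurable hf
  have h_s : Measurable s := (μ.measurable_rnDeriv ν).pow_const _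
  let a := ∫⁻ x, edist (f x) v₁ * s x ∂ν
  let b := ∫⁻ x, edist (f x) v₂ * s x ∂ν
  have h_triangle : edist v₁ v₂ * hellingerAffinity μ ν ≤ a + b := by
    calc edist v₁ v₂ * hellingerAffinity μ ν
        = ∫⁻ x, edist v₁ v₂ * s x ∂ν := (lintegral_const_mul _ h_s).symm
      _ ≤ ∫⁻ x, (edist (f x) v₁ * s x + edist (f x) v₂ * s x) ∂ν := by
          refine lintegral_mono fun x ↦ ?_
          rw [← add_mul]
          gcongr
          exact edist_triangle_left _ _ _
      _ = a + b := lintegral_add_left' ((h_edist v₁).mul h_s.aemeasurable) _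
  calc (edist v₁ v₂ * hellingerAffinity μ ν) ^ 2
      ≤ (2 * max a b) ^ 2 := by
        refine pow_le_pow_left' (h_triangle.trans ?_) 2
        rw [two_mul]
        exact add_le_add (le_max_left a b) (le_max_right a b)
    _ = 4 * max (a ^ 2) (b ^ 2) := by
        rw [mul_pow, (pow_left_mono 2).map_max]; norm_num
    _ ≤ 4 * max (∫⁻ x, edist (f x) v₁ ^ 2 ∂μ) (∫⁻ x, edist (f x) v₂ ^ 2 ∂ν) := by
        gcongr
        · exact sq_lintegral_mul_rnDeriv_rpow_half_le_left hμν (h_edist v₁)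
        · exact sq_lintegral_mul_rnDeriv_rpow_half_le_right (h_edist v₂)

end HellingerAffinity

section KLDiv

variable {α : Type*} [MeasurableSpace α] {μ ν : Measure α}

theorem klDiv_le_coe_iff {c : ℝ} :
    klDiv μ ν ≤ c ↔ μ ≪ ν ∧ Integrable (llr μ ν) μ ∧ ∫ x, llr μ ν x ∂μ ≤ c := by
  unfold klDiv
  split_ifs with h
  · simp [h]
  · simp only [top_le_iff, EReal.coe_ne_top, ← and_assoc, h, false_and]

theorem ofReal_exp_neg_le_hellingerAffinity_sq [IsProbabilityMeasure μ] [SigmaFinite ν] {c : ℝ}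
    (h : klDiv μ ν ≤ c) : ENNReal.ofReal (Real.exp (-c)) ≤ hellingerAffinity μ ν ^ 2 := by
  obtain ⟨hμν, h_int, h_le⟩ := klDiv_le_coe_iff.mp h
  have h_affinity : ENNReal.ofReal (Real.exp (-c / 2)) ≤ hellingerAffinity μ ν := by
    calc ENNReal.ofReal (Real.exp (-c / 2))
        ≤ ENNReal.ofReal (Real.exp (∫ x, -llr μ ν x / 2 ∂μ)) := by
          rw [integral_div, integral_neg]
          gcongr
      _ ≤ ∫⁻ x, ENNReal.ofReal (Real.exp (-llr μ ν x / 2)) ∂μ :=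
          ofReal_exp_integral_le_lintegral_ofReal_exp (h_int.neg.div_const 2)
      _ = hellingerAffinity μ ν := lintegral_exp_neg_half_llr hμν
  calc ENNReal.ofReal (Real.exp (-c)) = ENNReal.ofReal (Real.exp (-c / 2)) ^ 2 := by
        rw [← ENNReal.ofReal_pow (Real.exp_pos _).le, ← Real.exp_nat_mul]; ring_nf
    _ ≤ hellingerAffinity μ ν ^ 2 := by gcongr

end KLDiv

section Products

variable {ι : Type*} [Fintype ι] {Ω : ι → Type*} [∀ i, MeasurableSpace (Ω i)]

theorem lintegral_pi_prod_eq_prod_lintegral {ν : ∀ i, Measure (Ω i)}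
    [∀ i, IsProbabilityMeasure (ν i)] {g : ∀ i, Ω i → ℝ≥0∞} (hg : ∀ i, Measurable (g i)) :
    ∫⁻ x, ∏ i, g i (x i) ∂Measure.pi ν = ∏ i, ∫⁻ ω, g i ω ∂ν i := by
  rw [ProbabilityTheory.lintegral_prod_eq_prod_lintegral_of_indepFun Finset.univ
    (fun i (x : ∀ i, Ω i) ↦ g i (x i))
    (ProbabilityTheory.iIndepFun_pi fun i ↦ (hg i).aemeasurable)
    fun i ↦ (hg i).comp (measurable_pi_apply i)]
  exact Finset.prod_congr rfl fun i _ ↦ (measurePreserving_eval ν i).lintegral_comp (hg i)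

theorem pi_withDensity {ν : ∀ i, Measure (Ω i)} [∀ i, IsProbabilityMeasure (ν i)]
    {g : ∀ i, Ω i → ℝ≥0∞} [∀ i, SigmaFinite ((ν i).withDensity (g i))]
    (hg : ∀ i, Measurable (g i)) :
    Measure.pi (fun i ↦ (ν i).withDensity (g i))
      = (Measure.pi ν).withDensity fun x ↦ ∏ i, g i (x i) := by
  refine Measure.pi_eq fun s hs ↦ ?_
  rw [withDensity_apply _ (.univ_pi hs), ← lintegral_indicator (.univ_pi hs)]
  simp only [indicator_univ_pi_prod,
    lintegral_pi_prod_eq_prod_lintegral fun i ↦ (hg i).indicator (hs i),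
    lintegral_indicator (hs _), withDensity_apply _ (hs _)]

variable {μ ν : ∀ i, Measure (Ω i)} [∀ i, IsProbabilityMeasure (ν i)]

section SigmaFinite

variable [∀ i, SigmaFinite (μ i)]

theorem pi_eq_withDensity_prod_rnDeriv (hμν : ∀ i, μ i ≪ ν i) :
    Measure.pi μ = (Measure.pi ν).withDensity fun x ↦ ∏ i, (μ i).rnDeriv (ν i) (x i) := by
  have h_density (i : ι) : (ν i).withDensity ((μ i).rnDeriv (ν i)) = μ i :=
    Measure.withDensity_rnDeriv_eq _ _ (hμν i)
  rw [← pi_withDensity fun i ↦ (μ i).measurable_rnDeriv (ν i)]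
  simp only [h_density]

theorem absolutelyContinuous_pi (hμν : ∀ i, μ i ≪ ν i) : Measure.pi μ ≪ Measure.pi ν :=
  pi_eq_withDensity_prod_rnDeriv hμν ▸ withDensity_absolutelyContinuous _ _

theorem rnDeriv_pi (hμν : ∀ i, μ i ≪ ν i) :
    (Measure.pi μ).rnDeriv (Measure.pi ν)
      =ᵐ[Measure.pi ν] fun x ↦ ∏ i, (μ i).rnDeriv (ν i) (x i) := by
  rw [pi_eq_withDensity_prod_rnDeriv hμν]
  exact Measure.rnDeriv_withDensity _ (by fun_prop)

theorem llr_pi (hμν : ∀ i, μ i ≪ ν i) :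
    llr (Measure.pi μ) (Measure.pi ν) =ᵐ[Measure.pi μ] fun x ↦ ∑ i, llr (μ i) (ν i) (x i) := by
  have h_toReal_pos (i : ι) : ∀ᵐ ω ∂μ i, 0 < ((μ i).rnDeriv (ν i) ω).toReal := by
    filter_upwards [Measure.rnDeriv_pos (hμν i), (hμν i).ae_le ((μ i).rnDeriv_lt_top (ν i))]
      with ω h_pos h_lt_top using ENNReal.toReal_pos h_pos.ne' h_lt_top.ne
  have h_pi_pos : ∀ᵐ x ∂Measure.pi μ, ∀ i, 0 < ((μ i).rnDeriv (ν i) (x i)).toReal :=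
    ae_all_iff.mpr fun i ↦ (Measure.quasiMeasurePreserving_eval μ i).ae (h_toReal_pos i)
  filter_upwards [(absolutelyContinuous_pi hμν).ae_le (rnDeriv_pi hμν), h_pi_pos]
    with x h_rnDeriv h_pos
  rw [llr, h_rnDeriv, ENNReal.toReal_prod, Real.log_prod fun i _ ↦ (h_pos i).ne']
  rfl

end SigmaFinite

variable [∀ i, IsProbabilityMeasure (μ i)]

theorem klDiv_pi_le_sum {c : ι → ℝ} (h : ∀ i, klDiv (μ i) (ν i) ≤ c i) :
    klDiv (Measure.pi μ) (Measure.pi ν) ≤ ((∑ i, c i : ℝ) : EReal) := by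
  simp only [klDiv_le_coe_iff] at h ⊢
  have h_llr := llr_pi fun i ↦ (h i).1
  have h_int (i : ι) : Integrable (fun x ↦ llr (μ i) (ν i) (x i)) (Measure.pi μ) :=
    integrable_comp_eval (h i).2.1
  refine ⟨absolutelyContinuous_pi fun i ↦ (h i).1,
    (integrable_finsetSum _ fun i _ ↦ h_int i).congr h_llr.symm, ?_⟩
  calc ∫ x, llr (Measure.pi μ) (Measure.pi ν) x ∂Measure.pi μ
      = ∫ x, ∑ i, llr (μ i) (ν i) (x i) ∂Measure.pi μ := integral_congr_ae h_llr
    _ = ∑ i, ∫ x, llr (μ i) (ν i) (x i) ∂Measure.pi μ := integral_finsetSum _ fun i _ ↦ h_int i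
    _ = ∑ i, ∫ ω, llr (μ i) (ν i) ω ∂μ i := by
        simp only [integral_comp_eval (measurable_llr _ _).aestronglyMeasurable]
    _ ≤ ∑ i, c i := Finset.sum_le_sum fun i _ ↦ (h i).2.2

theorem two_point_minimax_lower_bound_general {c : ι → ℝ} (hkl : ∀ i, klDiv (μ i) (ν i) ≤ c i)
    {E : Type*} [PseudoEMetricSpace E] [MeasurableSpace E] [OpensMeasurableSpace E] (v₁ v₂ : E)
    {vhat : (∀ i, Ω i) → E} (hvhat : AEMeasurable vhat (Measure.pi ν)) :
    ENNReal.ofReal (Real.exp (-∑ i, c i)) * edist v₁ v₂ ^ 2 / 4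
      ≤ max (∫⁻ x, edist (vhat x) v₁ ^ 2 ∂Measure.pi μ)
          (∫⁻ x, edist (vhat x) v₂ ^ 2 ∂Measure.pi ν) := by
  refine ENNReal.div_le_of_le_mul' ?_
  calc ENNReal.ofReal (Real.exp (-∑ i, c i)) * edist v₁ v₂ ^ 2
      ≤ hellingerAffinity (Measure.pi μ) (Measure.pi ν) ^ 2 * edist v₁ v₂ ^ 2 := by
        gcongr
        exact ofReal_exp_neg_le_hellingerAffinity_sq (klDiv_pi_le_sum hkl)
    _ = (edist v₁ v₂ * hellingerAffinity (Measure.pi μ) (Measure.pi ν)) ^ 2 := by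
        rw [mul_pow, mul_comm]
    _ ≤ _ := edist_mul_hellingerAffinity_sq_le_four_mul_max
        (absolutelyContinuous_pi fun i ↦ (klDiv_le_coe_iff.mp (hkl i)).1) hvhat v₁ v₂

end Products

/-- Two-point minimax lower bound (core of Theorem 3): if `klDiv(P₁ ‖ P₂) ≤ 1/n`, then
no estimator `v̂` computed from `n` i.i.d. samples can have squared-error risk smaller
than `(v₁ − v₂)²/(16e)` simultaneously under `P₁^{⊗n}` (with target `v₁`) and under
`P₂^{⊗n}` (with target `v₂`). -/
theorem two_point_minimax_lower_bound
    {Ω : Type*} [MeasurableSpace Ω] (P₁ P₂ : Measure Ω)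
    [IsProbabilityMeasure P₁] [IsProbabilityMeasure P₂]
    (n : ℕ) (hn : 1 ≤ n)
    (hkl : klDiv P₁ P₂ ≤ ((1 / (n : ℝ) : ℝ) : EReal))
    (v₁ v₂ : ℝ) (vhat : (Fin n → Ω) → ℝ) (hvhat : Measurable vhat) :
    ENNReal.ofReal ((v₁ - v₂) ^ 2 / (16 * Real.exp 1))
      ≤ max (∫⁻ x, ENNReal.ofReal ((vhat x - v₁) ^ 2) ∂(Measure.pi fun _ : Fin n => P₁))
          (∫⁻ x, ENNReal.ofReal ((vhat x - v₂) ^ 2) ∂(Measure.pi fun _ : Fin n => P₂)) := by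
  have h_sum : ∑ _i : Fin n, 1 / (n : ℝ) = 1 := by
    have : (n : ℝ) ≠ 0 := by positivity
    simp [this]
  calc ENNReal.ofReal ((v₁ - v₂) ^ 2 / (16 * Real.exp 1))
      ≤ ENNReal.ofReal (Real.exp (-∑ _i : Fin n, 1 / (n : ℝ)) * (v₁ - v₂) ^ 2 / 4) := by
        rw [h_sum, Real.exp_neg, inv_mul_eq_div, div_div, mul_comm _ (4 : ℝ)]
        gcongr
        norm_num
    _ = ENNReal.ofReal (Real.exp (-∑ _i : Fin n, 1 / (n : ℝ))) * edist v₁ v₂ ^ 2 / 4 := by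
        rw [ENNReal.ofReal_div_of_pos four_pos, ENNReal.ofReal_mul (Real.exp_pos _).le,
          ofReal_sub_sq_eq_edist_sq, ENNReal.ofReal_ofNat]
    _ ≤ _ := by
        simpa only [ofReal_sub_sq_eq_edist_sq] using
          two_point_minimax_lower_bound_general (fun _ ↦ hkl) v₁ v₂ hvhat.aemeasurable
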